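/- Let (S, A, O, H, ρ0, P, Ω, r) be a finite POMDP that is L-decodable with decoder p* (L ≥ 1). Then there exist a finite set Z with |Z| ≤ |S|·(|O|·|A|)^(L−1) and a map p : X × A → PMF(Z), depending only on the POMDP and the decoder p* (independent of the policy and of the step h), such that: for every L-step policy π and every step h with L−1 ≤ h ≤ H−L there is a kernel G : Z → PMF(X) for which, for every admissible history τ_h of length h (with L-step window x_h) and every action a ∈ A, the distribution of the L-step window x_{h+L} of the random history at step h+L under the continuation process from (τ_h, a) equals the mixture x ↦ Σ_{z∈Z} p(x_h, a)(z)·G(z)(x). -/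

import Mathlib

open Finset

/-- A probability distribution on a finite type, given by a real-valued mass function. -/
structure FDist (α : Type) [Fintype α] : Type where
  prob : α → ℝ
  nonneg : ∀ a, 0 ≤ prob a
  sum_one : ∑ a, prob a = 1

/-- A finite POMDP `(S, A, O, H, ρ0, P, Ω, r)`: finite state, action and observation spaces,
horizon `H`, initial state distribution `ρ0`, transition kernel `P`, emission kernel `emit`
(denoted Ω in the text), and reward `r`. -/
structure POMDP (S A O : Type) [Fintype S] [Fintype A] [Fintype O] : Type where
  H : ℕ
  ρ0 : FDist S
  P : S → A → FDist S
  emit : S → FDist O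
  r : O → A → ℝ

/-- A history of length `h`: observations `o_0, …, o_h` and actions `a_0, …, a_{h-1}`. -/
abbrev Hist (O A : Type) (h : ℕ) : Type := (Fin (h + 1) → O) × (Fin h → A)

/-- A (history-dependent) policy: at each step `h` and history `τ_h`, a distribution on actions. -/
abbrev Policy (O A : Type) [Fintype A] : Type := (h : ℕ) → Hist O A h → FDist A

/-- The `L`-step window space `X = (O × A)^(L-1) × O`. -/
abbrev Window (O A : Type) (L : ℕ) : Type := (Fin (L - 1) → O × A) × O

section POMDPDefs

variable {S A O : Type} [Fintype S] [Fintype A] [Fintype O]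

/-- The history of length `h` read off from a full trajectory of observations and actions. -/
def Hist.take (H : ℕ) {h : ℕ} (hh : h ≤ H) (o : Fin (H + 1) → O) (a : Fin (H + 1) → A) :
    Hist O A h :=
  (fun i => o (Fin.castLE (by omega) i), fun i => a (Fin.castLE (by omega) i))

/-- The `L`-step window `x_h = (o_{h-L+1}, a_{h-L+1}, …, a_{h-1}, o_h)` of a history of
length `h` (for `L - 1 ≤ h`). -/
def Hist.window (L : ℕ) {h : ℕ} (hL : L - 1 ≤ h) (τ : Hist O A h) : Window O A L :=
  (fun i =>
      (τ.1 ⟨h + 1 - L + i.val, by have := i.isLt; omega⟩,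
       τ.2 ⟨h + 1 - L + i.val, by have := i.isLt; omega⟩),
    τ.1 (Fin.last h))

/-- The history `τ_h` extended by the action `a`, then alternately by the observations
`ω 0, …, ω (k-1)` (playing the roles of `o_{h+1}, …, o_{h+k}`) and the actions
`α 0, …, α (k-2)` (playing the roles of `a_{h+1}, …, a_{h+k-1}`). -/
def Hist.extend {h : ℕ} (τ : Hist O A h) (a : A) {m : ℕ} (ω : Fin m → O) (α : Fin m → A)
    (k : ℕ) (hk : k ≤ m) : Hist O A (h + k) :=
  (fun i =>
      if hi : i.val ≤ h then τ.1 ⟨i.val, by omega⟩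
      else ω ⟨i.val - h - 1, by have := i.isLt; omega⟩,
    fun i =>
      if hi : i.val < h then τ.2 ⟨i.val, by omega⟩
      else if hi' : i.val = h then a
      else α ⟨i.val - h - 1, by have := i.isLt; omega⟩)

/-- The history `τ_h` extended by one action `a` and one observation `o'`. -/
def Hist.snoc {h : ℕ} (τ : Hist O A h) (a : A) (o' : O) : Hist O A (h + 1) :=
  (fun i => if hi : i.val ≤ h then τ.1 ⟨i.val, by omega⟩ else o',
    fun i => if hi : i.val < h then τ.2 ⟨i.val, by omega⟩ else a)

/-- The probability assigned by the trajectory distribution of the policy `π` to the full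
trajectory `(s_0, o_0, a_0, …, s_H, o_H, a_H)`:
`s_0 ∼ ρ0`, `o_t ∼ Ω(s_t)`, `a_t ∼ π_t(τ_t)`, `s_{t+1} ∼ P(s_t, a_t)`. -/
noncomputable def trajProb (M : POMDP S A O) (π : Policy O A)
    (s : Fin (M.H + 1) → S) (o : Fin (M.H + 1) → O) (a : Fin (M.H + 1) → A) : ℝ :=
  M.ρ0.prob (s 0)
    * ∏ t : Fin (M.H + 1), (M.emit (s t)).prob (o t)
    * ∏ t : Fin (M.H + 1),
        (π t.val (Hist.take M.H (Nat.lt_succ_iff.mp t.isLt) o a)).prob (a t)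
    * ∏ t : Fin M.H, (M.P (s t.castSucc) (a t.castSucc)).prob (s t.succ)

variable [DecidableEq S] [DecidableEq A] [DecidableEq O]

/-- The probability that the history at step `h` equals `τ`, under the trajectory
distribution of `π`. -/
noncomputable def histProb (M : POMDP S A O) (π : Policy O A) {h : ℕ} (hh : h ≤ M.H)
    (τ : Hist O A h) : ℝ :=
  ∑ s : Fin (M.H + 1) → S, ∑ o : Fin (M.H + 1) → O, ∑ a : Fin (M.H + 1) → A,
    if Hist.take M.H hh o a = τ then trajProb M π s o a else 0

/-- The probability that the history at step `h` equals `τ` and `s_h = s0`, under the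
trajectory distribution of `π`. -/
noncomputable def stateHistProb (M : POMDP S A O) (π : Policy O A) {h : ℕ} (hh : h ≤ M.H)
    (τ : Hist O A h) (s0 : S) : ℝ :=
  ∑ s : Fin (M.H + 1) → S, ∑ o : Fin (M.H + 1) → O, ∑ a : Fin (M.H + 1) → A,
    if Hist.take M.H hh o a = τ ∧ s ⟨h, by omega⟩ = s0 then trajProb M π s o a else 0

variable [Nonempty A]

/-- The uniform distribution on a finite nonempty type. -/
noncomputable def uniformDist (A : Type) [Fintype A] [Nonempty A] : FDist A where
  prob _ := (Fintype.card A : ℝ)⁻¹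
  nonneg _ := by positivity
  sum_one := by
    have h : (Fintype.card A : ℝ) ≠ 0 := Nat.cast_ne_zero.mpr Fintype.card_ne_zero
    simp [Finset.sum_const, Finset.card_univ, nsmul_eq_mul, h]

/-- The uniformly random policy. -/
noncomputable def uniformPolicy (O A : Type) [Fintype A] [Nonempty A] : Policy O A :=
  fun _ _ => uniformDist A

/-- A history is admissible if it has positive probability under the uniformly random policy. -/
def Admissible (M : POMDP S A O) {h : ℕ} (hh : h ≤ M.H) (τ : Hist O A h) : Prop :=
  0 < histProb M (uniformPolicy O A) hh τ

/-- The belief `b(τ_h)(s)`: the conditional probability of `s_h = s` given that the history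
equals `τ_h`, under the trajectory distribution of the uniformly random policy. -/
noncomputable def belief (M : POMDP S A O) {h : ℕ} (hh : h ≤ M.H) (τ : Hist O A h)
    (s0 : S) : ℝ :=
  stateHistProb M (uniformPolicy O A) hh τ s0 / histProb M (uniformPolicy O A) hh τ

/-- An outcome of the continuation process from step `h` with `m = H - h` remaining steps:
states `s_h, …, s_H`, observations `o_{h+1}, …, o_H` and actions `a_{h+1}, …, a_H`. -/
abbrev ContOutcome (S O A : Type) (m : ℕ) : Type :=
  (Fin (m + 1) → S) × (Fin m → O) × (Fin m → A)

/-- The probability assigned to the outcome `c` by the continuation process from `(τ, a)`: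
`s_h ∼ b(τ)`, `a_h = a`, and for `h < t ≤ H`: `s_t ∼ P(s_{t-1}, a_{t-1})`, `o_t ∼ Ω(s_t)`,
`a_t ∼ π_t(τ_t)` where `τ_t` is `τ` extended by `(a, o_{h+1}, a_{h+1}, …, o_t)`. -/
noncomputable def contProb (M : POMDP S A O) (π : Policy O A) {h : ℕ} (hh : h ≤ M.H)
    (τ : Hist O A h) (a : A) (c : ContOutcome S O A (M.H - h)) : ℝ :=
  belief M hh τ (c.1 0)
    * ∏ t : Fin (M.H - h),
        ((M.P (c.1 t.castSucc)
              (if ht : t.val = 0 then a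
               else c.2.2 ⟨t.val - 1, by have := t.isLt; omega⟩)).prob (c.1 t.succ)
          * (M.emit (c.1 t.succ)).prob (c.2.1 t)
          * (π (h + t.val + 1)
              (Hist.extend τ a c.2.1 c.2.2 (t.val + 1)
                (by have := t.isLt; omega))).prob (c.2.2 t))

/-- The action-value `Q_h^π(τ_h, a)`: the expectation of `Σ_{t=h}^{H} r(o_t, a_t)` under the
continuation process from `(τ_h, a)`. -/
noncomputable def Qval (M : POMDP S A O) (π : Policy O A) {h : ℕ} (hh : h ≤ M.H)
    (τ : Hist O A h) (a : A) : ℝ :=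
  ∑ c : ContOutcome S O A (M.H - h),
    contProb M π hh τ a c *
      (M.r (τ.1 (Fin.last h)) a + ∑ t : Fin (M.H - h), M.r (c.2.1 t) (c.2.2 t))

/-- The value `V_h^π(τ_h) = Σ_a π_h(τ_h)(a) · Q_h^π(τ_h, a)`. -/
noncomputable def Vval (M : POMDP S A O) (π : Policy O A) {h : ℕ} (hh : h ≤ M.H)
    (τ : Hist O A h) : ℝ :=
  ∑ a : A, (π h τ).prob a * Qval M π hh τ a

/-- The POMDP `M` is `L`-decodable with decoder `pstar` if the belief of every admissible
history of length `h` with `L - 1 ≤ h ≤ H` equals `pstar` applied to its `L`-step window. -/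
def IsDecodable (M : POMDP S A O) (L : ℕ) (pstar : Window O A L → FDist S) : Prop :=
  ∀ (h : ℕ) (hh : h ≤ M.H) (hL : L - 1 ≤ h) (τ : Hist O A h),
    Admissible M hh τ → ∀ s : S, belief M hh τ s = (pstar (Hist.window L hL τ)).prob s

/-- `π` is an `L`-step policy: for `L - 1 ≤ h ≤ H`, `π_h(τ_h)` depends on `τ_h` only
through its `L`-step window. -/
def IsLStepPolicy (M : POMDP S A O) (L : ℕ) (π : Policy O A) : Prop :=
  ∀ (h : ℕ), h ≤ M.H → ∀ (hL : L - 1 ≤ h) (τ τ' : Hist O A h),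
    Hist.window L hL τ = Hist.window L hL τ' → π h τ = π h τ'

end POMDPDefs

/-! Put `Z = S × (O × A)^(L-1)`. Given the window `x_h` and the action `a`, draw `s_{h+1}` by
pushing the decoded belief through `P(·, a)`, and record alongside it the part
`(o_{h-L+2}, a_{h-L+2}, …, o_h, a)` of the past that is still visible in the window `x_{h+1}`.
From `s_{h+1}` on, the process interacts with the past only through the policy, and an `L`-step
policy reads at later steps nothing of the past beyond the recorded part. The law of `x_{h+L}`,
a window lying entirely after step `h`, is therefore a function of the latent variable. -/

theorem fin_take_snoc {α : Type*} {m k : ℕ} (hk : k ≤ m) (y : Fin m → α) (v : α) :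
    Fin.take k (by omega) (Fin.snoc y v : Fin (m + 1) → α) = Fin.take k hk y :=
  funext fun i => Fin.snoc_castSucc (α := fun _ => α) v y (Fin.castLE hk i)

namespace FDist

variable {α β γ : Type} [Fintype α] [Fintype β] [Fintype γ]

@[ext]
theorem ext {μ ν : FDist α} (h : ∀ x, μ.prob x = ν.prob x) : μ = ν := by
  cases μ
  cases ν
  congr
  exact funext h

/-- The Dirac distribution at a point. -/
def pure [DecidableEq α] (x : α) : FDist α where
  prob y := if y = x then 1 else 0
  nonneg y := by split_ifs <;> norm_num
  sum_one := by simp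

/-- The mixture of the distributions `κ x` with weights `μ`. -/
def bind (μ : FDist α) (κ : α → FDist β) : FDist β where
  prob y := ∑ x, μ.prob x * (κ x).prob y
  nonneg y := sum_nonneg fun x _ => mul_nonneg (μ.nonneg x) ((κ x).nonneg y)
  sum_one := by
    rw [sum_comm]
    simp only [← mul_sum, sum_one, mul_one]

/-- The push-forward of a distribution along a function. -/
def map [DecidableEq β] (f : α → β) (μ : FDist α) : FDist β :=
  μ.bind fun x => pure (f x)

/-- The joint law of a `μ`-distributed `x` and a `κ x`-distributed `y`. -/
def compProd (μ : FDist α) (κ : α → FDist β) : FDist (α × β) where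
  prob z := μ.prob z.1 * (κ z.1).prob z.2
  nonneg z := mul_nonneg (μ.nonneg _) ((κ _).nonneg _)
  sum_one := by
    rw [Fintype.sum_prod_type]
    simp only [← mul_sum, sum_one, mul_one]

theorem prod_prob_take_snoc (κ : (t : ℕ) → (Fin t → α) → FDist α) {m : ℕ} (y : Fin m → α)
    (v : α) :
    ∏ t : Fin (m + 1), (κ t (Fin.take t t.isLt.le (Fin.snoc y v : Fin (m + 1) → α))).prob
        ((Fin.snoc y v : Fin (m + 1) → α) t) =
      (∏ t : Fin m, (κ t (Fin.take t t.isLt.le y)).prob (y t)) * (κ m y).prob v := by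
  rw [Fin.prod_univ_castSucc, Fin.snoc_last]
  simp only [Fin.snoc_castSucc, Fin.val_castSucc, Fin.val_last]
  congr 1
  · exact prod_congr rfl fun t _ => by rw [fin_take_snoc t.isLt.le]
  · rw [fin_take_snoc le_rfl, Fin.take_eq_self]

/-- The law of the first `m` terms of a random sequence whose term number `t` is drawn from
`κ t` given the terms before it. -/
def traj (κ : (t : ℕ) → (Fin t → α) → FDist α) (m : ℕ) : FDist (Fin m → α) where
  prob y := ∏ t : Fin m, (κ t (Fin.take t t.isLt.le y)).prob (y t)
  nonneg y := prod_nonneg fun _ _ => nonneg _ _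
  sum_one := by
    induction m with
    | zero => simp
    | succ m ih =>
      rw [← (Fin.snocEquiv fun _ => α).sum_comp, Fintype.sum_prod_type, sum_comm]
      calc ∑ y : Fin m → α, ∑ v : α, ∏ t : Fin (m + 1),
              (κ t (Fin.take t t.isLt.le (Fin.snoc y v : Fin (m + 1) → α))).prob
                ((Fin.snoc y v : Fin (m + 1) → α) t)
          = ∑ y : Fin m → α, ∏ t : Fin m, (κ t (Fin.take t t.isLt.le y)).prob (y t) := by
            simp only [prod_prob_take_snoc, ← mul_sum, sum_one, mul_one]
        _ = 1 := ih

theorem pure_bind [DecidableEq α] (x : α) (κ : α → FDist β) : (pure x).bind κ = κ x := by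
  ext y
  simp [bind, pure]

theorem bind_pure [DecidableEq α] (μ : FDist α) : μ.bind pure = μ := by
  ext y
  simp [bind, pure]

theorem bind_assoc (μ : FDist α) (κ : α → FDist β) (η : β → FDist γ) :
    (μ.bind κ).bind η = μ.bind fun x => (κ x).bind η := by
  ext z
  simp only [bind, sum_mul, mul_sum, mul_assoc]
  exact sum_comm

theorem map_bind [DecidableEq γ] (f : β → γ) (μ : FDist α) (κ : α → FDist β) :
    (μ.bind κ).map f = μ.bind fun x => (κ x).map f :=
  bind_assoc _ _ _

theorem bind_map [DecidableEq β] (f : α → β) (μ : FDist α) (κ : β → FDist γ) :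
    (μ.map f).bind κ = μ.bind fun x => κ (f x) := by
  simp only [map, bind_assoc, pure_bind]

theorem prob_map [DecidableEq β] (f : α → β) (μ : FDist α) (y : β) :
    (μ.map f).prob y = ∑ x, if f x = y then μ.prob x else 0 := by
  simp [map, bind, pure, eq_comm]

end FDist

section Windows

variable {A O : Type}

/-- The observation-action pairs of the window `x` that remain visible one step later, when the
action `a` has been played: the oldest pair is dropped and `(o_h, a)` is appended. -/
def Window.shift {L : ℕ} (x : Window O A L) (a : A) : Fin (L - 1) → O × A :=
  Fin.tail (Fin.snoc x.1 (x.2, a) : Fin (L - 1 + 1) → O × A)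

theorem Hist.window_snoc (L : ℕ) {h : ℕ} (hL : L - 1 ≤ h) (τ : Hist O A h) (a : A) (o : O) :
    Hist.window L (by omega) (Hist.snoc τ a o) =
      (Window.shift (Hist.window L hL τ) a, o) := by
  refine Prod.ext (funext fun i => ?_) (by simp [Hist.window, Hist.snoc])
  have hi := i.isLt
  by_cases hlast : i.val + 1 < L - 1
  · have hidx : h + 1 + 1 - L + i.val = h + 1 - L + (i.val + 1) := by omega
    have hlt : h + 1 - L + (i.val + 1) < h := by omega
    simp [Hist.window, Hist.snoc, Window.shift, Fin.tail, Fin.snoc, hlast, hidx, hlt, hlt.le]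
  · have hidx : h + 1 + 1 - L + i.val = h := by omega
    simp [Hist.window, Hist.snoc, Window.shift, Fin.tail, Fin.snoc, hlast, hidx, Fin.last]

theorem Hist.extend_zero {h m : ℕ} (τ : Hist O A h) (a : A) (ω : Fin m → O) (α : Fin m → A) :
    Hist.extend τ a ω α 0 m.zero_le = τ := by
  refine Prod.ext (funext fun i => ?_) (funext fun i => ?_)
  · simp [Hist.extend, Nat.le_of_lt_succ i.isLt]
  · simp [Hist.extend]

theorem Hist.extend_succ {h m : ℕ} (τ : Hist O A h) (a : A) (ω : Fin m → O) (α : Fin m → A)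
    (k : ℕ) (hk : k < m) :
    Hist.extend τ a ω α (k + 1) hk =
      Hist.snoc (Hist.extend τ a ω α k hk.le)
        ((Fin.cons a α : Fin (m + 1) → A) ⟨k, by omega⟩) (ω ⟨k, hk⟩) := by
  refine Prod.ext (funext fun i => ?_) (funext fun i => ?_)
  · have hi := i.isLt
    simp only [Hist.extend, Hist.snoc]
    split_ifs
    · rfl
    · omega
    · rfl
    · congr
      omega
  · have hi := i.isLt
    simp only [Hist.extend, Hist.snoc]
    split_ifs
    · rfl
    · omega
    · rfl
    · obtain rfl : k = 0 := by omega
      rfl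
    · rfl
    · obtain ⟨k, rfl⟩ : ∃ j, k = j + 1 := ⟨k - 1, by omega⟩
      exact congrArg α (Fin.ext (by simp only; omega))

theorem Hist.shift_window_extend_congr {L h m : ℕ} (hL : L - 1 ≤ h) {τ τ' : Hist O A h} {a a' : A}
    (hshift : Window.shift (Hist.window L hL τ) a = Window.shift (Hist.window L hL τ') a')
    (ω : Fin m → O) (α : Fin m → A) (k : ℕ) (hk : k ≤ m) :
    Window.shift (Hist.window L (by omega) (Hist.extend τ a ω α k hk))
        ((Fin.cons a α : Fin (m + 1) → A) ⟨k, by omega⟩) =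
      Window.shift (Hist.window L (by omega) (Hist.extend τ' a' ω α k hk))
        ((Fin.cons a' α : Fin (m + 1) → A) ⟨k, by omega⟩) := by
  induction k with
  | zero =>
    rw [Hist.extend_zero, Hist.extend_zero]
    exact hshift
  | succ k ih =>
    rw [Hist.extend_succ, Hist.extend_succ, Hist.window_snoc L (by omega),
      Hist.window_snoc L (by omega), ih (by omega)]
    rfl

end Windows

section Continuation

variable {S A O : Type} [Fintype S] [Fintype A] [Fintype O]

/-- The conditional law of the state `s_{h+t+1}` of the continuation process given the triples
`y i = (s_{h+i+1}, o_{h+i+1}, a_{h+i+1})` for `i < t`, when `s_{h+1}` has law `ν`. -/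
def POMDP.nextStateLaw (M : POMDP S A O) (ν : FDist S) : {t : ℕ} → (Fin t → S × O × A) → FDist S
  | 0, _ => ν
  | t + 1, y => M.P (y (Fin.last t)).1 (y (Fin.last t)).2.2

/-- The conditional law of the triple `(s_{h+t+1}, o_{h+t+1}, a_{h+t+1})` of the continuation
process from `(τ, a)` given the `t` triples before it, when `s_{h+1}` has law `ν`. -/
def POMDP.contKernel (M : POMDP S A O) (π : Policy O A) {h : ℕ} (τ : Hist O A h) (a : A)
    (ν : FDist S) (t : ℕ) (y : Fin t → S × O × A) : FDist (S × O × A) :=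
  (M.nextStateLaw ν y).compProd fun s => (M.emit s).compProd fun o =>
    π (h + t + 1) (Hist.snoc
      (Hist.extend τ a (fun i => (y i).2.1) (fun i => (y i).2.2) t le_rfl)
      ((Fin.cons a fun i => (y i).2.2 : Fin (t + 1) → A) (Fin.last t)) o)

/-- The law of the triples `(s_{h+i+1}, o_{h+i+1}, a_{h+i+1})`, `i < m`, of the continuation
process from `(τ, a)`, when `s_{h+1}` has law `ν`. -/
def POMDP.contLaw (M : POMDP S A O) (π : Policy O A) {h : ℕ} (τ : Hist O A h) (a : A)
    (m : ℕ) (ν : FDist S) : FDist (Fin m → S × O × A) :=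
  FDist.traj (M.contKernel π τ a ν) m

theorem POMDP.contLaw_bind {ι : Type} [Fintype ι] (M : POMDP S A O) (π : Policy O A) {h : ℕ}
    (τ : Hist O A h) (a : A) (m : ℕ) (μ : FDist ι) (κ : ι → FDist S) :
    M.contLaw π τ a m (μ.bind κ) = μ.bind fun i => M.contLaw π τ a m (κ i) := by
  ext y
  cases m with
  | zero => simp [contLaw, FDist.traj, FDist.bind, μ.sum_one]
  | succ m =>
    simp only [contLaw, FDist.traj, FDist.bind, Fin.prod_univ_succ, contKernel, nextStateLaw,
      FDist.compProd, Fin.val_zero, Fin.val_succ, sum_mul, mul_assoc]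

theorem POMDP.contLaw_congr {M : POMDP S A O} {L : ℕ} {π : Policy O A} (hπ : IsLStepPolicy M L π)
    {h m : ℕ} (hL : L - 1 ≤ h) (hm : h + m ≤ M.H) {τ τ' : Hist O A h} {a a' : A}
    (hshift : Window.shift (Hist.window L hL τ) a = Window.shift (Hist.window L hL τ') a')
    (ν : FDist S) : M.contLaw π τ a m ν = M.contLaw π τ' a' m ν := by
  have kernel_eq (t : Fin m) (y : Fin t → S × O × A) :
      M.contKernel π τ a ν t y = M.contKernel π τ' a' ν t y := by
    have ht := t.isLt
    unfold contKernel
    congr! 4 with s o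
    refine hπ _ (by omega) (by omega) _ _ ?_
    rw [Hist.window_snoc L (by omega), Hist.window_snoc L (by omega)]
    exact congrArg (·, o) (Hist.shift_window_extend_congr hL hshift _ _ t le_rfl)
  ext y
  simp only [contLaw, FDist.traj, kernel_eq]

/-- An outcome of the continuation process, as the state `s_h` and the sequence of triples
`(s_{h+i+1}, o_{h+i+1}, a_{h+i+1})`. -/
def ContOutcome.equivTriples (S O A : Type) (m : ℕ) :
    ContOutcome S O A m ≃ S × (Fin m → S × O × A) where
  toFun c := (c.1 0, fun i => (c.1 i.succ, c.2.1 i, c.2.2 i))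
  invFun q := (Fin.cons q.1 fun i => (q.2 i).1, fun i => (q.2 i).2.1, fun i => (q.2 i).2.2)
  left_inv c := Prod.ext (Fin.cons_self_tail c.1) rfl
  right_inv _ := rfl

variable [DecidableEq A] [DecidableEq O]

/-- The law of the window `x_{h+L}` of the continuation process from `(τ, a)` run for `m` steps,
when `s_{h+1}` has law `ν`. -/
def POMDP.windowLaw (M : POMDP S A O) (π : Policy O A) {L h m : ℕ} (hLm : L ≤ m)
    (τ : Hist O A h) (a : A) (ν : FDist S) : FDist (Window O A L) :=
  (M.contLaw π τ a m ν).map fun y =>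
    Hist.window L (by omega) (Hist.extend τ a (fun i => (y i).2.1) (fun i => (y i).2.2) L hLm)

theorem POMDP.windowLaw_bind {ι : Type} [Fintype ι] (M : POMDP S A O) (π : Policy O A)
    {L h m : ℕ} (hLm : L ≤ m) (τ : Hist O A h) (a : A) (μ : FDist ι) (κ : ι → FDist S) :
    M.windowLaw π hLm τ a (μ.bind κ) = μ.bind fun i => M.windowLaw π hLm τ a (κ i) := by
  simp only [windowLaw, contLaw_bind, FDist.map_bind]

theorem POMDP.windowLaw_factorsThrough_shift {M : POMDP S A O} {L : ℕ} (hL1 : 1 ≤ L)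
    {π : Policy O A} (hπ : IsLStepPolicy M L π) {h m : ℕ} (hL : L - 1 ≤ h) (hm : h + m ≤ M.H)
    (hLm : L ≤ m) :
    Function.FactorsThrough (fun c : Hist O A h × A => M.windowLaw π hLm c.1 c.2)
      (fun c => Window.shift (Hist.window L hL c.1) c.2) := by
  rintro ⟨τ, a⟩ ⟨τ', a'⟩ hshift
  obtain ⟨k, rfl⟩ : ∃ k, L = k + 1 := ⟨L - 1, by omega⟩
  funext ν
  simp only [windowLaw, contLaw_congr hπ hL hm hshift ν]
  congr 1
  funext y
  rw [Hist.extend_succ, Hist.extend_succ, Hist.window_snoc (k + 1) (by omega),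
    Hist.window_snoc (k + 1) (by omega), Hist.shift_window_extend_congr hL hshift _ _ k (by omega)]

variable [DecidableEq S] [Nonempty A]

theorem contProb_eq_belief_mul_contLaw (M : POMDP S A O) (π : Policy O A) {h : ℕ} (hh : h ≤ M.H)
    (τ : Hist O A h) (a : A) (c : ContOutcome S O A (M.H - h)) :
    contProb M π hh τ a c = belief M hh τ (c.1 0) *
      (M.contLaw π τ a (M.H - h) (M.P (c.1 0) a)).prob
        (ContOutcome.equivTriples S O A (M.H - h) c).2 := by
  unfold contProb
  congr 1
  refine prod_congr rfl fun t _ => ?_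
  rw [Hist.extend_succ, mul_assoc]
  obtain ⟨_ | t, ht⟩ := t <;> rfl

theorem sum_contProb_window_eq (M : POMDP S A O) (π : Policy O A) {L h : ℕ} (hh : h ≤ M.H)
    (hLm : L ≤ M.H - h) (τ : Hist O A h) (a : A) {b : FDist S}
    (hb : ∀ s, belief M hh τ s = b.prob s) (x : Window O A L) :
    (∑ c : ContOutcome S O A (M.H - h),
        if Hist.window L (by omega) (Hist.extend τ a c.2.1 c.2.2 L hLm) = x
        then contProb M π hh τ a c else 0) =
      (M.windowLaw π hLm τ a (b.bind fun s => M.P s a)).prob x := by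
  rw [POMDP.windowLaw_bind]
  simp only [contProb_eq_belief_mul_contLaw, hb, FDist.bind, POMDP.windowLaw, FDist.prob_map,
    mul_sum, mul_ite, mul_zero]
  rw [← Fintype.sum_prod_type']
  exact (ContOutcome.equivTriples S O A (M.H - h)).sum_comp fun q =>
    if Hist.window L _ (Hist.extend τ a (fun i => (q.2 i).2.1) (fun i => (q.2 i).2.2) L hLm) = x
    then b.prob q.1 * (M.contLaw π τ a (M.H - h) (M.P q.1 a)).prob q.2 else 0

end Continuation

/-- In an `L`-decodable finite POMDP, there is a latent space `Z` with
`|Z| ≤ |S|·(|O|·|A|)^(L-1)` and a representation `p : X × A → PMF(Z)`, independent of the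
policy and the step, such that for every `L`-step policy `π` and every step `h` with
`L-1 ≤ h ≤ H-L` there is a kernel `G : Z → PMF(X)` with: for every admissible history
`τ_h` and action `a`, the law of the `L`-step window `x_{h+L}` under the continuation
process from `(τ_h, a)` is the mixture `x ↦ Σ_z p(x_h, a)(z)·G(z)(x)`. -/
theorem statement1
    {S A O : Type} [Fintype S] [Fintype A] [Fintype O]
    [Nonempty S] [Nonempty A] [Nonempty O]
    [DecidableEq S] [DecidableEq A] [DecidableEq O]
    (M : POMDP S A O) (L : ℕ) (hL1 : 1 ≤ L)
    (pstar : Window O A L → FDist S)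
    (hdec : IsDecodable M L pstar) :
    ∃ n : ℕ, n ≤ Fintype.card S * (Fintype.card O * Fintype.card A) ^ (L - 1) ∧
      ∃ p : Window O A L → A → FDist (Fin n),
        ∀ π : Policy O A, IsLStepPolicy M L π →
          ∀ (h : ℕ) (hL : L - 1 ≤ h) (hh : h + L ≤ M.H),
            ∃ G : Fin n → FDist (Window O A L),
              ∀ τ : Hist O A h, Admissible M (by omega : h ≤ M.H) τ → ∀ a : A,
                ∀ x : Window O A L,
                  (∑ c : ContOutcome S O A (M.H - h),
                      if Hist.window L (by omega : L - 1 ≤ h + L)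
                            (Hist.extend τ a c.2.1 c.2.2 L (by omega)) = x
                      then contProb M π (by omega : h ≤ M.H) τ a c else 0) =
                    ∑ z : Fin n, (p (Hist.window L hL τ) a).prob z * (G z).prob x := by
  let e := Fintype.equivFin (S × (Fin (L - 1) → O × A))
  let ν (x : Window O A L) (a : A) : FDist S := (pstar x).bind fun s => M.P s a
  refine ⟨_, (by simp), fun x a => (ν x a).map fun s => e (s, Window.shift x a), ?_⟩
  intro π hπ h hL hh
  have hLm : L ≤ M.H - h := by omega
  have : Nonempty (FDist S → FDist (Window O A L)) :=
    ⟨M.windowLaw π hLm (Classical.arbitrary (Hist O A h)) (Classical.arbitrary A)⟩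
  obtain ⟨g, hg⟩ := (Function.factorsThrough_iff _).1
    (POMDP.windowLaw_factorsThrough_shift hL1 hπ hL (by omega : h + (M.H - h) ≤ M.H) hLm)
  refine ⟨fun z => g (e.symm z).2 (FDist.pure (e.symm z).1), fun τ hτ a x => ?_⟩
  have hga : M.windowLaw π hLm τ a = g (Window.shift (Hist.window L hL τ) a) :=
    congrFun hg (τ, a)
  rw [sum_contProb_window_eq M π _ hLm τ a (hdec h _ hL τ hτ) x]
  calc (M.windowLaw π hLm τ a (ν (Hist.window L hL τ) a)).prob x
      = ((ν (Hist.window L hL τ) a).bind fun s =>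
          g (Window.shift (Hist.window L hL τ) a) (FDist.pure s)).prob x := by
        rw [← hga, ← POMDP.windowLaw_bind, FDist.bind_pure]
    _ = (((ν (Hist.window L hL τ) a).map fun s => e (s, Window.shift (Hist.window L hL τ) a)).bind
          fun z => g (e.symm z).2 (FDist.pure (e.symm z).1)).prob x := by
        simp only [FDist.bind_map, Equiv.symm_apply_apply]
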